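/- arXiv:1906.00135 — 2 statements merged into one kernel-verified Lean document; each statement's English description precedes it below -/
import Mathlib

section
/- For all integers n ≥ 1 and m ≥ 1, the 1/2-domination number of the Cartesian product of the path on n vertices with the complete graph on m vertices satisfies γ_{1/2}(P_n □ K_m) = ⌈mn/(2(m+2))⌉. -/
/-!
A vertex of `P_n □ K_m` has degree at most `m + 1`, so each member of a `p`-dominating set accounts
for at most `m + 2` of the `pmn` vertices to be dominated; this gives the lower bound.

Let `k = ⌈pmn / (m + 2)⌉` with `p ≤ 1/2`. If `n ≤ 2k`, one vertex in each of `⌈pn⌉ ≤ k` copies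
of `K_m` dominates these copies. If `2k < n`, it suffices to find `k` vertices off the two end
copies with pairwise disjoint closed neighborhoods, since they dominate exactly `k(m + 2)` vertices.
For `m ≥ 2`, take the (0-based) path positions `1, 3, …, 2k - 1` and alternate between two vertices
of `K_m`. For `m = 1`, take `1, 4, …, 3k - 2`, which fit because `2k < n` and
`k = ⌈pn / 3⌉ ≤ ⌈n / 6⌉` give `3k ≤ n`.
-/

open SimpleGraph

/-- The closed neighborhood `N[S]` of a set of vertices `S`:
all vertices equal or adjacent to some vertex of `S`. -/
def closedNbhd {V : Type*} (G : SimpleGraph V) (S : Set V) : Set V :=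
  {w | ∃ u ∈ S, w = u ∨ G.Adj u w}

/-- `S` is a `p`-dominating set of `G` if `N[S]` contains at least a proportion `p`
of the vertices. -/
def IsPDomSet {V : Type*} [Fintype V] (G : SimpleGraph V) (p : ℝ) (S : Set V) : Prop :=
  p * (Fintype.card V : ℝ) ≤ ((closedNbhd G S).ncard : ℝ)

/-- The `p`-domination number `γ_p(G)`: the minimum cardinality of a `p`-dominating set. -/
noncomputable def pDomNum {V : Type*} [Fintype V] (G : SimpleGraph V) (p : ℝ) : ℕ :=
  sInf {k : ℕ | ∃ S : Set V, IsPDomSet G p S ∧ S.ncard = k}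

/-- `S` is a `γ_p`-set: a `p`-dominating set of minimum cardinality `γ_p(G)`. -/
def IsGammaPSet {V : Type*} [Fintype V] (G : SimpleGraph V) (p : ℝ) (S : Set V) : Prop :=
  IsPDomSet G p S ∧ S.ncard = pDomNum G p

/-- `v` belongs to the `p`-influencing set of `G`, i.e. the union of all `γ_p`-sets. -/
def InInfluence {V : Type*} [Fintype V] (G : SimpleGraph V) (p : ℝ) (v : V) : Prop :=
  ∃ S : Set V, IsGammaPSet G p S ∧ v ∈ S

open scoped Function

section GeneralGraph

variable {V ι : Type*} {G : SimpleGraph V} {p : ℝ} {S : Set V} {d : ℕ}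

lemma mem_closedNbhd_singleton {u w : V} : w ∈ closedNbhd G {u} ↔ w = u ∨ G.Adj u w := by
  simp [closedNbhd]

lemma closedNbhd_eq_biUnion (G : SimpleGraph V) (S : Set V) :
    closedNbhd G S = ⋃ u ∈ S, closedNbhd G {u} := by
  ext w
  simp [closedNbhd]

lemma subset_closedNbhd (G : SimpleGraph V) (S : Set V) : S ⊆ closedNbhd G S :=
  fun u hu => ⟨u, hu, Or.inl rfl⟩

lemma ncard_closedNbhd_singleton (u : V) [Fintype (G.neighborSet u)] :
    (closedNbhd G {u}).ncard = G.degree u + 1 := by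
  have hinsert : closedNbhd G {u} = insert u (G.neighborSet u) :=
    Set.ext fun _ => mem_closedNbhd_singleton
  rw [hinsert, Set.ncard_insert_of_notMem (G.notMem_neighborSet_self), Set.ncard_eq_toFinset_card',
    Set.toFinset_card, card_neighborSet_eq_degree]

lemma ncard_closedNbhd_le_mul [G.LocallyFinite] (hd : ∀ v, G.degree v ≤ d) (hS : S.Finite) :
    (closedNbhd G S).ncard ≤ S.ncard * (d + 1) := by
  lift S to Finset V using hS
  calc (closedNbhd G S).ncard = (⋃ u ∈ S, closedNbhd G {u}).ncard := by
        simp only [closedNbhd_eq_biUnion G S, Finset.mem_coe]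
    _ ≤ ∑ u ∈ S, (closedNbhd G {u}).ncard := S.set_ncard_biUnion_le _
    _ ≤ S.card * (d + 1) := Finset.sum_le_card_nsmul S _ _ fun u _ => by
        rw [ncard_closedNbhd_singleton]
        exact Nat.succ_le_succ (hd u)
    _ = (S : Set V).ncard * (d + 1) := by rw [Set.ncard_coe_finset]

/-- A packing of `G`: vertices whose closed neighborhoods are pairwise disjoint. It is given as an
indexed family, so that its size is the cardinality of the index type. -/
def IsPacking (G : SimpleGraph V) (f : ι → V) : Prop :=
  Pairwise (Disjoint on fun i => closedNbhd G {f i})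

lemma IsPacking.mul_le_ncard_closedNbhd_range [Finite V] [Fintype ι] [G.LocallyFinite] {f : ι → V}
    (hf : IsPacking G f) (hd : ∀ i, d ≤ G.degree (f i)) :
    Fintype.card ι * (d + 1) ≤ (closedNbhd G (Set.range f)).ncard :=
  calc Fintype.card ι * (d + 1) ≤ ∑ i, (closedNbhd G {f i}).ncard :=
        Finset.card_nsmul_le_sum Finset.univ (fun i => (closedNbhd G {f i}).ncard) _ fun i _ => by
          rw [ncard_closedNbhd_singleton]
          exact Nat.succ_le_succ (hd i)
    _ = (⋃ i, closedNbhd G {f i}).ncard := by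
        rw [Set.ncard_iUnion_of_finite (fun _ => Set.toFinite _) hf, finsum_eq_sum_of_fintype]
    _ = (closedNbhd G (Set.range f)).ncard := by
        rw [closedNbhd_eq_biUnion G (Set.range f), Set.biUnion_range]

variable [Fintype V]

lemma pDomNum_le_ncard (hS : IsPDomSet G p S) : pDomNum G p ≤ S.ncard :=
  Nat.sInf_le ⟨S, hS, rfl⟩

lemma isPDomSet_univ (hp : p ≤ 1) : IsPDomSet G p Set.univ := by
  rw [IsPDomSet, Set.univ_subset_iff.1 (subset_closedNbhd G Set.univ), Set.ncard_univ,
    Nat.card_eq_fintype_card]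
  exact mul_le_of_le_one_left (Nat.cast_nonneg _) hp

lemma exists_isGammaPSet (G : SimpleGraph V) (hp : p ≤ 1) : ∃ S, IsGammaPSet G p S :=
  Nat.sInf_mem (s := {k | ∃ S, IsPDomSet G p S ∧ S.ncard = k}) ⟨_, _, isPDomSet_univ hp, rfl⟩

lemma ceil_div_le_pDomNum [G.LocallyFinite] (hp : p ≤ 1) (hd : ∀ v, G.degree v ≤ d) :
    ⌈p * Fintype.card V / (d + 1)⌉₊ ≤ pDomNum G p := by
  obtain ⟨S, hS, hcard⟩ := exists_isGammaPSet G hp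
  rw [Nat.ceil_le, div_le_iff₀ (by positivity), ← hcard]
  calc p * Fintype.card V ≤ (closedNbhd G S).ncard := hS
    _ ≤ S.ncard * (d + 1) := mod_cast ncard_closedNbhd_le_mul hd S.toFinite

lemma IsPacking.pDomNum_le [Fintype ι] [G.LocallyFinite] {f : ι → V} (hf : IsPacking G f)
    (hd : ∀ i, d ≤ G.degree (f i)) (hcard : p * Fintype.card V ≤ Fintype.card ι * (d + 1)) :
    pDomNum G p ≤ Fintype.card ι := by
  have hdom : IsPDomSet G p (Set.range f) :=
    hcard.trans (mod_cast hf.mul_le_ncard_closedNbhd_range hd)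
  calc pDomNum G p ≤ (Set.range f).ncard := pDomNum_le_ncard hdom
    _ ≤ Fintype.card ι := by
      rw [← Set.image_univ, ← Nat.card_eq_fintype_card, ← Set.ncard_univ]
      exact Set.ncard_image_le

end GeneralGraph

section BoxProd

variable {V W : Type*} {G : SimpleGraph V} {H : SimpleGraph W}

lemma mem_closedNbhd_boxProd_singleton {u w : V × W} :
    w ∈ closedNbhd (G □ H) {u} ↔
      w.1 ∈ closedNbhd G {u.1} ∧ w.2 = u.2 ∨ w.1 = u.1 ∧ w.2 ∈ closedNbhd H {u.2} := by
  simp only [mem_closedNbhd_singleton, boxProd_adj, Prod.ext_iff]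
  grind

lemma disjoint_closedNbhd_boxProd_of_fst {u v : V × W}
    (h : Disjoint (closedNbhd G {u.1}) (closedNbhd G {v.1})) :
    Disjoint (closedNbhd (G □ H) {u}) (closedNbhd (G □ H) {v}) := by
  have hfst (x : V × W) : closedNbhd (G □ H) {x} ⊆ Prod.fst ⁻¹' closedNbhd G {x.1} := by
    intro w hw
    rcases mem_closedNbhd_boxProd_singleton.1 hw with ⟨hw, -⟩ | ⟨hw, -⟩
    · exact hw
    · exact mem_closedNbhd_singleton.2 (Or.inl hw)
  exact (h.preimage Prod.fst).mono (hfst u) (hfst v)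

lemma disjoint_closedNbhd_boxProd_of_ne {u v : V × W} (hne : u.1 ≠ v.1)
    (hadj : ¬ G.Adj u.1 v.1) (hsnd : u.2 ≠ v.2) :
    Disjoint (closedNbhd (G □ H) {u}) (closedNbhd (G □ H) {v}) := by
  rw [Set.disjoint_left]
  intro w hu hv
  rw [mem_closedNbhd_boxProd_singleton] at hu hv
  simp only [mem_closedNbhd_singleton] at hu hv
  grind [G.adj_comm]

lemma pDomNum_boxProd_le_ceil [Fintype V] [Fintype W] (G : SimpleGraph V) {b : W} {p : ℝ}
    (hb : H.IsUniversal b) (hp : p ≤ 1) :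
    pDomNum (G □ H) p ≤ ⌈p * Fintype.card V⌉₊ := by
  have hceil : ⌈p * Fintype.card V⌉₊ ≤ (Set.univ : Set V).ncard := by
    rw [Set.ncard_univ, Nat.card_eq_fintype_card, Nat.ceil_le]
    exact mul_le_of_le_one_left (Nat.cast_nonneg _) hp
  obtain ⟨T, -, hT⟩ := Set.exists_subset_card_eq hceil
  have hsub : T ×ˢ Set.univ ⊆ closedNbhd (G □ H) (T ×ˢ {b}) := by
    rintro ⟨x, y⟩ ⟨hx, -⟩
    refine ⟨(x, b), ⟨hx, rfl⟩, ?_⟩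
    rcases eq_or_ne b y with rfl | hy
    · exact Or.inl rfl
    · exact Or.inr (boxProd_adj_right.2 (hb hy))
  have hdom : IsPDomSet (G □ H) p (T ×ˢ {b}) :=
    calc p * Fintype.card (V × W) = p * Fintype.card V * Fintype.card W := by
          rw [Fintype.card_prod, Nat.cast_mul, mul_assoc]
      _ ≤ T.ncard * Fintype.card W := by
          rw [hT]
          exact mul_le_mul_of_nonneg_right (Nat.le_ceil _) (Nat.cast_nonneg _)
      _ = (T ×ˢ (Set.univ : Set W)).ncard := by
          rw [Set.ncard_prod, Set.ncard_univ, Nat.card_eq_fintype_card, Nat.cast_mul]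
      _ ≤ (closedNbhd (G □ H) (T ×ˢ {b})).ncard := mod_cast Set.ncard_le_ncard hsub
  calc pDomNum (G □ H) p ≤ (T ×ˢ {b}).ncard := pDomNum_le_ncard hdom
    _ = ⌈p * Fintype.card V⌉₊ := by rw [Set.ncard_prod, Set.ncard_singleton, mul_one, hT]

end BoxProd

section PathGraph

variable {n d k : ℕ} {ι α : Type*} {p : ℝ}

lemma degree_pathGraph_le_two (v : Fin n) [Fintype ((pathGraph n).neighborSet v)] :
    (pathGraph n).degree v ≤ 2 := by
  have hsub : ((pathGraph n).neighborFinset v).map Fin.valEmbedding ⊆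
      {(v : ℕ) - 1, (v : ℕ) + 1} := by
    intro x
    simp only [Finset.mem_map, mem_neighborFinset, pathGraph_adj, Fin.valEmbedding_apply,
      Finset.mem_insert, Finset.mem_singleton]
    grind
  calc (pathGraph n).degree v = (((pathGraph n).neighborFinset v).map Fin.valEmbedding).card := by
        rw [Finset.card_map, card_neighborFinset_eq_degree]
    _ ≤ Finset.card {(v : ℕ) - 1, (v : ℕ) + 1} := Finset.card_le_card hsub
    _ ≤ 2 := Finset.card_le_two

lemma two_le_degree_pathGraph {v : Fin n} [Fintype ((pathGraph n).neighborSet v)]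
    (hpos : 0 < (v : ℕ)) (hlt : (v : ℕ) + 1 < n) : 2 ≤ (pathGraph n).degree v := by
  let pred : Fin n := ⟨v - 1, by omega⟩
  let succ : Fin n := ⟨v + 1, hlt⟩
  have hpred : (pathGraph n).Adj v pred := pathGraph_adj.2 (Or.inr (Nat.sub_add_cancel hpos))
  have hsucc : (pathGraph n).Adj v succ := pathGraph_adj.2 (Or.inl rfl)
  have hne : pred ≠ succ := Fin.ne_of_val_ne (by dsimp only [pred, succ]; omega)
  have hsub : {pred, succ} ⊆ (pathGraph n).neighborFinset v := by
    simp [Finset.insert_subset_iff, hpred, hsucc]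
  calc 2 = Finset.card {pred, succ} := (Finset.card_pair hne).symm
    _ ≤ (pathGraph n).degree v := Finset.card_le_card hsub

lemma disjoint_closedNbhd_pathGraph {u v : Fin n}
    (h : (u : ℕ) + 3 ≤ v ∨ (v : ℕ) + 3 ≤ u) :
    Disjoint (closedNbhd (pathGraph n) {u}) (closedNbhd (pathGraph n) {v}) := by
  rw [Set.disjoint_left]
  intro w hu hv
  simp only [mem_closedNbhd_singleton, pathGraph_adj, Fin.ext_iff] at hu hv
  omega

lemma exists_isPacking_of_three_mul_le [Nonempty α] (H : SimpleGraph α) (hk : 3 * k ≤ n) :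
    ∃ f : Fin k → Fin n × α, IsPacking (pathGraph n □ H) f ∧
      ∀ i, 0 < ((f i).1 : ℕ) ∧ ((f i).1 : ℕ) + 1 < n := by
  refine ⟨fun i => (⟨3 * i + 1, by omega⟩, Classical.arbitrary α), fun i j hij => ?_,
    fun i => ⟨by simp, by dsimp only; omega⟩⟩
  refine disjoint_closedNbhd_boxProd_of_fst (disjoint_closedNbhd_pathGraph ?_)
  dsimp only
  omega

lemma exists_isPacking_of_two_mul_lt [Nontrivial α] (H : SimpleGraph α) (hk : 2 * k < n) :
    ∃ f : Fin k → Fin n × α, IsPacking (pathGraph n □ H) f ∧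
      ∀ i, 0 < ((f i).1 : ℕ) ∧ ((f i).1 : ℕ) + 1 < n := by
  obtain ⟨a, b, hab⟩ := exists_pair_ne α
  refine ⟨fun i => (⟨2 * i + 1, by omega⟩, if Even (i : ℕ) then a else b), fun i j hij => ?_,
    fun i => ⟨by simp, by dsimp only; omega⟩⟩
  by_cases hparity : Even (i : ℕ) ↔ Even (j : ℕ)
  · refine disjoint_closedNbhd_boxProd_of_fst (disjoint_closedNbhd_pathGraph ?_)
    dsimp only
    grind
  · refine disjoint_closedNbhd_boxProd_of_ne ?_ ?_ ?_
    · simpa [Fin.ext_iff] using hij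
    · simp only [pathGraph_adj]
      omega
    · grind

lemma IsPacking.pDomNum_pathGraph_boxProd_le [Fintype ι] [Fintype α] {H : SimpleGraph α}
    [H.LocallyFinite] {f : ι → Fin n × α} (hf : IsPacking (pathGraph n □ H) f)
    (hinterior : ∀ i, 0 < ((f i).1 : ℕ) ∧ ((f i).1 : ℕ) + 1 < n) (hd : ∀ a, d ≤ H.degree a)
    (hcard : p * (n * Fintype.card α) ≤ Fintype.card ι * (d + 3)) :
    pDomNum (pathGraph n □ H) p ≤ Fintype.card ι := by
  classical
  refine hf.pDomNum_le (d := d + 2) (fun i => ?_) ?_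
  · rw [degree_boxProd, add_comm d]
    exact add_le_add (two_le_degree_pathGraph (hinterior i).1 (hinterior i).2) (hd _)
  · rw [Fintype.card_prod, Fintype.card_fin]
    push_cast
    linarith

end PathGraph

section PathBoxComplete

variable {α : Type*} [Fintype α] {p : ℝ}

lemma ceil_le_pDomNum_pathGraph_boxProd_top (n : ℕ) (hp : p ≤ 1) :
    ⌈p * (n * Fintype.card α) / (Fintype.card α + 2)⌉₊ ≤
      pDomNum (pathGraph n □ (⊤ : SimpleGraph α)) p := by
  classical
  have hdegree (v : Fin n × α) :
      (pathGraph n □ (⊤ : SimpleGraph α)).degree v ≤ Fintype.card α + 1 := by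
    have hfst := degree_pathGraph_le_two v.1
    have hsnd := (IsRegularOfDegree.top (V := α)).degree_eq v.2
    have hpos : 0 < Fintype.card α := Fintype.card_pos_iff.2 ⟨v.2⟩
    rw [degree_boxProd]
    omega
  convert ceil_div_le_pDomNum hp hdegree using 3
  · rw [Fintype.card_prod, Fintype.card_fin, Nat.cast_mul]
  · push_cast
    ring

lemma three_mul_ceil_le {x : ℝ} {n : ℕ} (hx : x ≤ n / 6) (hn : 2 * ⌈x⌉₊ < n) :
    3 * ⌈x⌉₊ ≤ n := by
  rcases Nat.eq_zero_or_pos ⌈x⌉₊ with hzero | hpos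
  · omega
  · have hlt : ((⌈x⌉₊ - 1 : ℕ) : ℝ) < n / 6 :=
      (Nat.lt_ceil.1 (Nat.sub_one_lt_of_lt hpos)).trans_le hx
    have hlt_mul : (⌈x⌉₊ - 1) * 6 < n := mod_cast (lt_div_iff₀ (by norm_num)).1 hlt
    omega

lemma exists_isPacking_pathGraph_boxProd_top [Nonempty α] {n : ℕ} (hp : p ≤ 1 / 2)
    (hn : 2 * ⌈p * (n * Fintype.card α) / (Fintype.card α + 2)⌉₊ < n) :
    ∃ f : Fin ⌈p * (n * Fintype.card α) / (Fintype.card α + 2)⌉₊ → Fin n × α,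
      IsPacking (pathGraph n □ (⊤ : SimpleGraph α)) f ∧
        ∀ i, 0 < ((f i).1 : ℕ) ∧ ((f i).1 : ℕ) + 1 < n := by
  rcases subsingleton_or_nontrivial α with hα | hα
  · have hcard : Fintype.card α = 1 :=
      le_antisymm (Fintype.card_le_one_iff_subsingleton.2 hα) Fintype.card_pos
    have hsixth : p * (n * Fintype.card α) / (Fintype.card α + 2) ≤ n / 6 := by
      rw [hcard, Nat.cast_one, div_le_iff₀ (by norm_num)]
      linarith [mul_le_mul_of_nonneg_right hp (Nat.cast_nonneg n)]
    exact exists_isPacking_of_three_mul_le ⊤ (three_mul_ceil_le hsixth hn)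
  · exact exists_isPacking_of_two_mul_lt ⊤ hn

lemma pDomNum_pathGraph_boxProd_top_le_ceil [Nonempty α] (n : ℕ) (hp : p ≤ 1 / 2) :
    pDomNum (pathGraph n □ (⊤ : SimpleGraph α)) p ≤
      ⌈p * (n * Fintype.card α) / (Fintype.card α + 2)⌉₊ := by
  classical
  set k := ⌈p * (n * Fintype.card α) / (Fintype.card α + 2)⌉₊
  rcases le_or_gt n (2 * k) with hnk | hkn
  · have hpn : p * n ≤ k := by
      have hnk_real : (n : ℝ) ≤ 2 * k := mod_cast hnk
      linarith [mul_le_mul_of_nonneg_right hp (Nat.cast_nonneg n)]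
    calc pDomNum (pathGraph n □ (⊤ : SimpleGraph α)) p ≤ ⌈p * Fintype.card (Fin n)⌉₊ :=
          pDomNum_boxProd_le_ceil _ (b := Classical.arbitrary α) .top (by linarith)
      _ ≤ k := by rwa [Fintype.card_fin, Nat.ceil_le]
  · obtain ⟨f, hf, hinterior⟩ := exists_isPacking_pathGraph_boxProd_top hp hkn
    have hdegree (a : α) : Fintype.card α - 1 ≤ (⊤ : SimpleGraph α).degree a :=
      (IsRegularOfDegree.top.degree_eq a).ge
    have hcount : p * (n * Fintype.card α) ≤
        Fintype.card (Fin k) * ((Fintype.card α - 1 : ℕ) + 3) := by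
      have hsize : ((Fintype.card α - 1 : ℕ) : ℝ) + 3 = Fintype.card α + 2 := by
        rw [Nat.cast_pred Fintype.card_pos]
        ring
      rw [Fintype.card_fin, hsize, ← div_le_iff₀ (by positivity)]
      exact Nat.le_ceil _
    calc pDomNum (pathGraph n □ (⊤ : SimpleGraph α)) p ≤ Fintype.card (Fin k) :=
          hf.pDomNum_pathGraph_boxProd_le hinterior hdegree hcount
      _ = k := Fintype.card_fin k

end PathBoxComplete

theorem stmt2_general {α : Type*} [Fintype α] [Nonempty α] (n : ℕ) {p : ℝ} (hp : p ≤ 1 / 2) :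
    pDomNum (pathGraph n □ (⊤ : SimpleGraph α)) p =
      ⌈p * (n * Fintype.card α) / (Fintype.card α + 2)⌉₊ :=
  le_antisymm (pDomNum_pathGraph_boxProd_top_le_ceil n hp)
    (ceil_le_pDomNum_pathGraph_boxProd_top n (by linarith))

theorem stmt2 (n m : ℕ) (hn : 1 ≤ n) (hm : 1 ≤ m) :
    pDomNum (pathGraph n □ (⊤ : SimpleGraph (Fin m))) (1/2) =
      ⌈((m : ℝ) * (n : ℝ)) / (2 * ((m : ℝ) + 2))⌉₊ := by
  have : Nonempty (Fin m) := ⟨⟨0, hm⟩⟩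
  rw [stmt2_general n le_rfl, Fintype.card_fin]
  congr 1
  field_simp
end

section
/- Let K_{m,n} be the complete bipartite graph with parts V_1 and V_2 of sizes m and n respectively, where m > n ≥ 1. Then: (i) for every real p with 0 < p ≤ (n+1)/(m+n), the p-influencing set of K_{m,n} is V_1 ∪ V_2; (ii) for every real p with (m+2)/(m+n) ≤ p ≤ 1, the p-influencing set of K_{m,n} is V_1 ∪ V_2; and (iii) for every real p with (n+2)/(m+n) ≤ p ≤ (m+1)/(m+n), the p-influencing set of K_{m,n} is V_2. -/
/-!
For `p > 0` the empty set is not `p`-dominating, so as soon as some singleton is `p`-dominating, the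
`γ_p`-sets are exactly the `p`-dominating singletons. In `K_{m,n}` a single vertex dominates itself
and the opposite part, so which singletons qualify depends on the position of `p (m + n)` relative
to `n + 1` and `m + 1`. When `p (m + n)` exceeds both, no singleton qualifies, but any two vertices
in different parts dominate the whole graph and hence form a `γ_p`-set.
-/

open SimpleGraph

section PDomination

variable {V : Type*} {G : SimpleGraph V}

lemma closedNbhd_empty : closedNbhd G ∅ = ∅ := by
  ext w
  simp [closedNbhd]

lemma closedNbhd_singleton (v : V) : closedNbhd G {v} = insert v (G.neighborSet v) := by
  ext w
  simp [closedNbhd]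

variable [Fintype V] {p : ℝ} {S : Set V} {u v : V}

lemma IsPDomSet.nonempty [Nonempty V] (hS : IsPDomSet G p S) (hp : 0 < p) : S.Nonempty := by
  rw [Set.nonempty_iff_ne_empty]
  rintro rfl
  rw [IsPDomSet, closedNbhd_empty, Set.ncard_empty, Nat.cast_zero] at hS
  have hV : (0 : ℝ) < Fintype.card V := mod_cast Fintype.card_pos
  exact (mul_pos hp hV).not_ge hS

lemma isPDomSet_of_closedNbhd_eq_univ (hS : closedNbhd G S = Set.univ) (hp : p ≤ 1) :
    IsPDomSet G p S := by
  rw [IsPDomSet, hS, Set.ncard_univ, Nat.card_eq_fintype_card]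
  exact mul_le_of_le_one_left (Nat.cast_nonneg _) hp

lemma isPDomSet_singleton_iff :
    IsPDomSet G p {v} ↔ p ≤ ((G.neighborSet v).ncard + 1) / Fintype.card V := by
  have hV : (0 : ℝ) < Fintype.card V := mod_cast Fintype.card_pos_iff.2 ⟨v⟩
  rw [IsPDomSet, closedNbhd_singleton, Set.ncard_insert_of_notMem G.notMem_neighborSet_self,
    Nat.cast_succ, le_div_iff₀ hV]

lemma isGammaPSet_iff_forall_le :
    IsGammaPSet G p S ↔ IsPDomSet G p S ∧ ∀ T, IsPDomSet G p T → S.ncard ≤ T.ncard := by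
  refine and_congr_right fun hS => ⟨fun h T hT => h.trans_le (Nat.sInf_le ⟨T, hT, rfl⟩),
    fun hmin => le_antisymm (le_csInf ⟨_, S, hS, rfl⟩ ?_) (Nat.sInf_le ⟨S, hS, rfl⟩)⟩
  rintro _ ⟨T, hT, rfl⟩
  exact hmin T hT

lemma isGammaPSet_singleton_iff (hp : 0 < p) : IsGammaPSet G p {v} ↔ IsPDomSet G p {v} := by
  have : Nonempty V := ⟨v⟩
  rw [isGammaPSet_iff_forall_le, and_iff_left_iff_imp]
  intro _ T hT
  rw [Set.ncard_singleton]
  exact (hT.nonempty hp).ncard_pos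

lemma inInfluence_iff_isPDomSet_singleton (hp : 0 < p) (hu : IsPDomSet G p {u}) :
    InInfluence G p v ↔ IsPDomSet G p {v} := by
  refine ⟨?_, fun hv => ⟨{v}, (isGammaPSet_singleton_iff hp).2 hv, rfl⟩⟩
  rintro ⟨S, hS, hvS⟩
  rw [isGammaPSet_iff_forall_le] at hS
  have hcard : S.ncard ≤ 1 := (hS.2 {u} hu).trans_eq (Set.ncard_singleton u)
  have hSv : S = {v} := (Set.ncard_le_one_iff_subsingleton.1 hcard).eq_singleton_of_mem hvS
  exact hSv ▸ hS.1

lemma isGammaPSet_pair (hp : 0 < p) (hsingle : ∀ w, ¬ IsPDomSet G p {w})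
    (huv : IsPDomSet G p {u, v}) : IsGammaPSet G p {u, v} := by
  have : Nonempty V := ⟨u⟩
  refine isGammaPSet_iff_forall_le.2 ⟨huv, fun T hT => (Set.ncard_insert_le u {v}).trans ?_⟩
  rw [Set.ncard_singleton]
  obtain ⟨w, rfl⟩ | hnontrivial := (hT.nonempty hp).exists_eq_singleton_or_nontrivial
  · exact absurd hT (hsingle w)
  · exact Set.one_lt_ncard_iff_nontrivial.2 hnontrivial

end PDomination

section CompleteBipartite

variable {α β : Type*}

lemma neighborSet_completeBipartiteGraph_inl (a : α) :
    (completeBipartiteGraph α β).neighborSet (Sum.inl a) = Set.range Sum.inr := by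
  ext (w | w) <;> simp

lemma neighborSet_completeBipartiteGraph_inr (b : β) :
    (completeBipartiteGraph α β).neighborSet (Sum.inr b) = Set.range Sum.inl := by
  ext (w | w) <;> simp

lemma closedNbhd_completeBipartiteGraph_inl_inr (a : α) (b : β) :
    closedNbhd (completeBipartiteGraph α β) {Sum.inl a, Sum.inr b} = Set.univ := by
  ext (w | w) <;> simp [closedNbhd]

variable [Fintype α] [Fintype β] {p : ℝ}

lemma isPDomSet_completeBipartiteGraph_singleton_inl {a : α} :
    IsPDomSet (completeBipartiteGraph α β) p {Sum.inl a} ↔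
      p ≤ (Fintype.card β + 1) / (Fintype.card α + Fintype.card β) := by
  rw [isPDomSet_singleton_iff, neighborSet_completeBipartiteGraph_inl,
    Set.ncard_range_of_injective Sum.inr_injective, Nat.card_eq_fintype_card, Fintype.card_sum,
    Nat.cast_add]

lemma isPDomSet_completeBipartiteGraph_singleton_inr {b : β} :
    IsPDomSet (completeBipartiteGraph α β) p {Sum.inr b} ↔
      p ≤ (Fintype.card α + 1) / (Fintype.card α + Fintype.card β) := by
  rw [isPDomSet_singleton_iff, neighborSet_completeBipartiteGraph_inr,
    Set.ncard_range_of_injective Sum.inl_injective, Nat.card_eq_fintype_card, Fintype.card_sum,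
    Nat.cast_add]

lemma inInfluence_completeBipartiteGraph_of_forall_not_isPDomSet_singleton [Nonempty α] [Nonempty β]
    (hp₀ : 0 < p) (hp₁ : p ≤ 1)
    (hsingle : ∀ w, ¬ IsPDomSet (completeBipartiteGraph α β) p {w}) (v : α ⊕ β) :
    InInfluence (completeBipartiteGraph α β) p v := by
  have hpair (a : α) (b : β) :
      IsGammaPSet (completeBipartiteGraph α β) p {Sum.inl a, Sum.inr b} :=
    isGammaPSet_pair hp₀ hsingle
      (isPDomSet_of_closedNbhd_eq_univ (closedNbhd_completeBipartiteGraph_inl_inr a b) hp₁)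
  obtain a | b := v
  · exact ⟨_, hpair a (Classical.arbitrary β), Set.mem_insert _ _⟩
  · exact ⟨_, hpair (Classical.arbitrary α) b, Set.mem_insert_of_mem _ rfl⟩

end CompleteBipartite

theorem stmt13_general {α β : Type*} [Fintype α] [Fintype β] [Nonempty β]
    (hcard : Fintype.card β ≤ Fintype.card α) :
    (∀ p : ℝ, 0 < p → p ≤ (Fintype.card β + 1) / (Fintype.card α + Fintype.card β) →
      ∀ v : α ⊕ β, InInfluence (completeBipartiteGraph α β) p v) ∧
    (∀ p : ℝ, (Fintype.card α + 1) / (Fintype.card α + Fintype.card β) < p → p ≤ 1 →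
      ∀ v : α ⊕ β, InInfluence (completeBipartiteGraph α β) p v) ∧
    (∀ p : ℝ, (Fintype.card β + 1) / (Fintype.card α + Fintype.card β) < p →
      p ≤ (Fintype.card α + 1) / (Fintype.card α + Fintype.card β) →
      ∀ v : α ⊕ β, InInfluence (completeBipartiteGraph α β) p v ↔ v.isRight) := by
  have : Nonempty α := Fintype.card_pos_iff.1 (Fintype.card_pos.trans_le hcard)
  have hle : ((Fintype.card β : ℝ) + 1) / (Fintype.card α + Fintype.card β) ≤
      (Fintype.card α + 1) / (Fintype.card α + Fintype.card β) := by gcongr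
  refine ⟨fun p hp₀ hp v => ?_, fun p hp hp₁ v => ?_, fun p hp hp' v => ?_⟩
  · have hv : IsPDomSet (completeBipartiteGraph α β) p {v} := by
      obtain a | b := v
      · exact isPDomSet_completeBipartiteGraph_singleton_inl.2 hp
      · exact isPDomSet_completeBipartiteGraph_singleton_inr.2 (hp.trans hle)
    exact (inInfluence_iff_isPDomSet_singleton hp₀ hv).2 hv
  · refine inInfluence_completeBipartiteGraph_of_forall_not_isPDomSet_singleton
      (hp.trans_le' (by positivity)) hp₁ ?_ v
    rintro (a | b)
    · exact fun h => (hle.trans_lt hp).not_ge (isPDomSet_completeBipartiteGraph_singleton_inl.1 h)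
    · exact fun h => hp.not_ge (isPDomSet_completeBipartiteGraph_singleton_inr.1 h)
  · have hp₀ : 0 < p := hp.trans_le' (by positivity)
    have hright (b : β) : IsPDomSet (completeBipartiteGraph α β) p {Sum.inr b} :=
      isPDomSet_completeBipartiteGraph_singleton_inr.2 hp'
    rw [inInfluence_iff_isPDomSet_singleton hp₀ (hright (Classical.arbitrary β))]
    obtain a | b := v
    · simp [isPDomSet_completeBipartiteGraph_singleton_inl, hp]
    · simp [hright b]

theorem stmt13 (m n : ℕ) (hn : 1 ≤ n) (hmn : n < m) :
    (∀ p : ℝ, 0 < p → p ≤ ((n : ℝ) + 1) / ((m : ℝ) + (n : ℝ)) →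
      ∀ v : Fin m ⊕ Fin n, InInfluence (completeBipartiteGraph (Fin m) (Fin n)) p v) ∧
    (∀ p : ℝ, ((m : ℝ) + 2) / ((m : ℝ) + (n : ℝ)) ≤ p → p ≤ 1 →
      ∀ v : Fin m ⊕ Fin n, InInfluence (completeBipartiteGraph (Fin m) (Fin n)) p v) ∧
    (∀ p : ℝ, ((n : ℝ) + 2) / ((m : ℝ) + (n : ℝ)) ≤ p →
      p ≤ ((m : ℝ) + 1) / ((m : ℝ) + (n : ℝ)) →
      ∀ v : Fin m ⊕ Fin n,
        InInfluence (completeBipartiteGraph (Fin m) (Fin n)) p v ↔ v.isRight) := by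
  have : NeZero n := ⟨by lia⟩
  have hlt (x : ℝ) : (x + 1) / ((m : ℝ) + n) < (x + 2) / (m + n) := by gcongr; norm_num
  have h := stmt13_general (α := Fin m) (β := Fin n) (by simpa using hmn.le)
  simp only [Fintype.card_fin] at h
  exact ⟨h.1, fun p hp => h.2.1 p ((hlt m).trans_le hp), fun p hp => h.2.2 p ((hlt n).trans_le hp)⟩
end
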